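/- Let c and m be natural numbers with c ≥ 2 and m > c. Then the complete bipartite graph K_{c,m} contains an isolating cycle of length 2c, every cycle of K_{c,m} has length at most 2c, and consequently K_{c,m} contains no cycle of length greater than 2c containing the vertex set of that isolating cycle. -/

import Mathlib

/-- A closed walk `C` in `G` is an *isolating cycle* if it is a cycle and every
connected component of the graph obtained from `G` by deleting the vertices of
`C` consists of a single vertex. -/
def SimpleGraph.IsIsolatingCycle {V : Type*} (G : SimpleGraph V) {u : V}
    (C : G.Walk u u) : Prop :=
  C.IsCycle ∧
    ∀ K : (G.induce {v : V | v ∉ C.support}).ConnectedComponent,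
      ∃ x, K.supp = {x}

theorem kcm_count {c m : ℕ} {u v : Fin c ⊕ Fin m}
    (p : (completeBipartiteGraph (Fin c) (Fin m)).Walk u v) :
    2 * p.support.tail.countP (fun x => x.isLeft) + u.isLeft.toNat
      = p.length + v.isLeft.toNat := by
  induction p with
  | nil => simp
  | @cons a b d h p ih =>
    rw [SimpleGraph.Walk.support_cons, List.tail_cons, SimpleGraph.Walk.support_eq_cons,
      List.countP_cons, SimpleGraph.Walk.length_cons]
    rcases a with a | a <;> rcases b with b | b <;> simp at h ih ⊢ <;> omega

theorem kcm_card (c m : ℕ) :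
    (Finset.univ.filter (fun x : Fin c ⊕ Fin m => x.isLeft = true)).card = c := by
  have : (Finset.univ.filter (fun x : Fin c ⊕ Fin m => x.isLeft = true))
      = Finset.univ.map Function.Embedding.inl := by
    ext x
    rcases x with x | x <;> simp
  rw [this]; simp

theorem kcm_cycle {c m : ℕ} {u : Fin c ⊕ Fin m}
    (p : (completeBipartiteGraph (Fin c) (Fin m)).Walk u u) (hp : p.IsCycle) :
    p.length = 2 * (p.support.tail.toFinset.filter (fun x => x.isLeft = true)).card := by
  have h := kcm_count p
  have h2 : (p.support.tail.toFinset.filter (fun x => x.isLeft = true)).card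
      = p.support.tail.countP (fun x => x.isLeft) := by
    rw [List.countP_eq_length_filter, ← List.toFinset_card_of_nodup (hp.support_nodup.filter _),
      List.toFinset_filter]
  omega

theorem kcm_le {c m : ℕ} {u : Fin c ⊕ Fin m}
    (p : (completeBipartiteGraph (Fin c) (Fin m)).Walk u u) (hp : p.IsCycle) :
    p.length ≤ 2 * c := by
  have h := kcm_cycle p hp
  have h1 := Finset.card_le_card (Finset.filter_subset_filter (fun x => x.isLeft = true)
    (Finset.subset_univ p.support.tail.toFinset))
  rw [kcm_card] at h1
  omega

theorem kcm_mem {c m : ℕ} {u : Fin c ⊕ Fin m}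
    (p : (completeBipartiteGraph (Fin c) (Fin m)).Walk u u) (hp : p.IsCycle)
    (hl : p.length = 2 * c) (i : Fin c) : Sum.inl i ∈ p.support := by
  have h := kcm_cycle p hp
  have h1 := Finset.eq_of_subset_of_card_le
    (Finset.filter_subset_filter (fun x => x.isLeft = true)
      (Finset.subset_univ p.support.tail.toFinset)) (by rw [kcm_card]; omega)
  have h2 : Sum.inl i ∈ Finset.univ.filter (fun x : Fin c ⊕ Fin m => x.isLeft = true) := by simp
  rw [← h1, Finset.mem_filter, List.mem_toFinset] at h2
  exact List.mem_of_mem_tail h2.1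

theorem kcm_exists (c m : ℕ) (hc : 2 ≤ c) (hm : c < m) :
    ∃ (u : Fin c ⊕ Fin m) (C : (completeBipartiteGraph (Fin c) (Fin m)).Walk u u),
      C.IsCycle ∧ C.length = 2 * c := by
  rw [← SimpleGraph.cycleGraph_isContained_iff (by omega)]
  let f : Fin (2 * c) → Fin c ⊕ Fin m := fun i =>
    if i.val % 2 = 0 then Sum.inl ⟨i.val / 2, by omega⟩ else Sum.inr ⟨i.val / 2, by omega⟩
  refine ⟨⟨⟨f, ?_⟩, ?_⟩⟩
  · intro a b h
    have h' : a.val % 2 ≠ b.val % 2 := by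
      rw [SimpleGraph.cycleGraph_adj'] at h
      have ha := a.isLt
      have hb := b.isLt
      rw [Fin.sub_def, Fin.sub_def] at h
      simp only at h
      rcases h with h | h
      · have := Nat.div_add_mod (2 * c - b.val + a.val) (2 * c)
        rw [h, mul_assoc] at this
        omega
      · have := Nat.div_add_mod (2 * c - a.val + b.val) (2 * c)
        rw [h, mul_assoc] at this
        omega
    by_cases h1 : a.val % 2 = 0 <;> by_cases h2 : b.val % 2 = 0 <;> simp [f, h1, h2] <;> omega
  · intro a b h
    change f a = f b at h
    by_cases h1 : a.val % 2 = 0 <;> by_cases h2 : b.val % 2 = 0 <;> simp [f, h1, h2] at h <;> omega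

/-- Let `c ≥ 2` and `m > c`. Then the complete bipartite graph `K_{c,m}`
contains an isolating cycle of length `2c`, every cycle of `K_{c,m}` has
length at most `2c`, and consequently `K_{c,m}` contains no cycle of length
greater than `2c` containing the vertex set of that isolating cycle. -/
theorem completeBipartite_isolating_not_extendable (c m : ℕ) (hc : 2 ≤ c) (hm : c < m) :
    ∃ (u : Fin c ⊕ Fin m)
      (C : (completeBipartiteGraph (Fin c) (Fin m)).Walk u u),
      (completeBipartiteGraph (Fin c) (Fin m)).IsIsolatingCycle C ∧
      C.length = 2 * c ∧
      (∀ (v : Fin c ⊕ Fin m)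
          (C' : (completeBipartiteGraph (Fin c) (Fin m)).Walk v v),
          C'.IsCycle → C'.length ≤ 2 * c) ∧
      ¬ ∃ (v : Fin c ⊕ Fin m)
          (C' : (completeBipartiteGraph (Fin c) (Fin m)).Walk v v),
          C'.IsCycle ∧ 2 * c < C'.length ∧ ∀ y, y ∈ C.support → y ∈ C'.support := by
  obtain ⟨u, C, hC, hl⟩ := kcm_exists c m hc hm
  refine ⟨u, C, ⟨hC, ?_⟩, hl, fun v C' h => kcm_le C' h, ?_⟩
  · intro K
    induction K using SimpleGraph.ConnectedComponent.ind with
    | h x =>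
      refine ⟨x, ?_⟩
      ext y
      simp only [SimpleGraph.ConnectedComponent.mem_supp_iff, SimpleGraph.ConnectedComponent.eq,
        Set.mem_singleton_iff]
      constructor
      · rintro ⟨p⟩
        cases p with
        | nil => rfl
        | @cons _ z _ h q =>
          exfalso
          obtain ⟨y, hy⟩ := y
          obtain ⟨z, hz⟩ := z
          rcases y with y | y
          · exact hy (kcm_mem C hC hl y)
          · rcases z with z | z
            · exact hz (kcm_mem C hC hl z)
            · simp at h
      · rintro rfl
        exact SimpleGraph.Reachable.refl _
  · rintro ⟨v, C', h, h2, -⟩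
    have := kcm_le C' h
    omega
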